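/- With G_d as above (quotient of Hall's group by c_i = c₁^{d(i)}, d antisymmetric, d(1)=1), G_d is conjugacy separable if and only if d mod q is periodic for every positive integer q. -/

import Mathlib

/-- Generators of Hall's group: the shift `t`, and `a i`, `c i` for `i : ℤ`. -/
inductive Gen where
  | t : Gen
  | a : ℤ → Gen
  | c : ℤ → Gen

/-- The commutator convention of the paper: `[x, y] = x⁻¹y⁻¹xy`. -/
def pcomm {G : Type*} [Group G] (x y : G) : G := x⁻¹ * y⁻¹ * x * y

/-- The relations of `G_d`: those of Hall's group `G₀` together with
`c i = (c 1) ^ d i`. -/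
def rels (d : ℤ → ℤ) : Set (FreeGroup Gen) :=
  (Set.range fun i : ℤ =>
    FreeGroup.of Gen.t * FreeGroup.of (Gen.a i) * (FreeGroup.of Gen.t)⁻¹ *
      (FreeGroup.of (Gen.a (i + 1)))⁻¹) ∪
  (Set.range fun i : ℤ =>
    FreeGroup.of Gen.t * FreeGroup.of (Gen.c i) * (FreeGroup.of Gen.t)⁻¹ *
      (FreeGroup.of (Gen.c i))⁻¹) ∪
  (Set.range fun p : ℤ × ℤ =>
    pcomm (FreeGroup.of (Gen.a p.1)) (FreeGroup.of (Gen.a p.2)) *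
      (FreeGroup.of (Gen.c (p.1 - p.2)))⁻¹) ∪
  (Set.range fun p : ℤ × ℤ =>
    pcomm (FreeGroup.of (Gen.c p.1)) (FreeGroup.of (Gen.a p.2))) ∪
  (Set.range fun p : ℤ × ℤ =>
    pcomm (FreeGroup.of (Gen.c p.1)) (FreeGroup.of (Gen.c p.2))) ∪
  (Set.range fun i : ℤ =>
    FreeGroup.of (Gen.c i) * ((FreeGroup.of (Gen.c 1)) ^ (d i))⁻¹)

/-- The quotient `G_d` of Hall's group. -/
abbrev Gd (d : ℤ → ℤ) := PresentedGroup (rels d)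

namespace HallGroup

section Form

variable {I J : Type*} [AddCommGroup I] [AddCommGroup J] {S T : Type*} [CommRing S] [CommRing T]

/-- Translation of the index by `k`. -/
noncomputable def shift (k : I) : (I →₀ S) →ₗ[S] (I →₀ S) :=
  Finsupp.lmapDomain S S (k + ·)

@[simp]
lemma shift_single (k i : I) (a : S) :
    shift k (Finsupp.single i a) = Finsupp.single (k + i) a := by
  simp [shift]

@[simp]
lemma shift_zero (f : I →₀ S) : shift 0 f = f := by
  simp only [shift, Finsupp.lmapDomain_apply, zero_add]
  exact Finsupp.mapDomain_id

lemma shift_shift (k l : I) (f : I →₀ S) : shift k (shift l f) = shift (k + l) f := by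
  induction f using Finsupp.induction_linear with
  | zero => simp
  | add f g hf hg => simp [hf, hg]
  | single i a => simp [add_assoc]

lemma shift_apply_add (k i : I) (f : I →₀ S) : shift k f (k + i) = f i :=
  Finsupp.mapDomain_apply (add_right_injective k) f i

/-- The translation-invariant bilinear form with `form d eᵢ eⱼ = d (i - j)`. -/
noncomputable def form (d : I → S) : (I →₀ S) →ₗ[S] (I →₀ S) →ₗ[S] S :=
  Finsupp.linearCombination S fun i => Finsupp.linearCombination S fun j => d (i - j)

@[simp]
lemma form_single (d : I → S) (i j : I) (a b : S) :
    form d (Finsupp.single i a) (Finsupp.single j b) = a * (b * d (i - j)) := by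
  simp [form]

lemma form_shift (d : I → S) (k : I) (f g : I →₀ S) :
    form d (shift k f) (shift k g) = form d f g := by
  induction f using Finsupp.induction_linear with
  | zero => simp
  | add f f' hf hf' => simp [hf, hf']
  | single i a =>
    induction g using Finsupp.induction_linear with
    | zero => simp
    | add g g' hg hg' => simp only [map_add, hg, hg']
    | single j b => simp

lemma form_swap {d : I → S} (hd : ∀ i, d (-i) = -d i) (f g : I →₀ S) :
    form d g f = -form d f g := by
  induction f using Finsupp.induction_linear with
  | zero => simp
  | add f f' hf hf' => simp [hf, hf']; ring
  | single i a =>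
    induction g using Finsupp.induction_linear with
    | zero => simp
    | add g g' hg hg' => simp [hg, hg']; ring
    | single j b =>
      have := hd (i - j)
      rw [neg_sub] at this
      simp [this]; ring

/-- Change of index group and of coefficients. -/
noncomputable def push (α : I →+ J) (σ : S →+* T) : (I →₀ S) →+ (J →₀ T) :=
  Finsupp.liftAddHom fun i => (Finsupp.singleAddHom (α i)).comp σ.toAddMonoidHom

@[simp]
lemma push_single (α : I →+ J) (σ : S →+* T) (i : I) (a : S) :
    push α σ (Finsupp.single i a) = Finsupp.single (α i) (σ a) := by
  simp [push]

lemma push_apply [DecidableEq J] (α : I →+ J) (σ : S →+* T) (f : I →₀ S) (j : J) :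
    push α σ f j = ∑ i ∈ f.support, if α i = j then σ (f i) else 0 := by
  simp [push, Finsupp.sum, Finsupp.finsetSum_apply, Finsupp.single_apply]

lemma push_shift (α : I →+ J) (σ : S →+* T) (k : I) (f : I →₀ S) :
    push α σ (shift k f) = shift (α k) (push α σ f) := by
  induction f using Finsupp.induction_linear with
  | zero => simp
  | add f g hf hg => simp [hf, hg]
  | single i a => simp

lemma push_push {K U : Type*} [AddCommGroup K] [CommRing U] (α : I →+ J) (σ : S →+* T)
    (β : J →+ K) (τ : T →+* U) (f : I →₀ S) :
    push β τ (push α σ f) = push (β.comp α) (τ.comp σ) f := by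
  induction f using Finsupp.induction_linear with
  | zero => simp
  | add f g hf hg => simp [hf, hg]
  | single i a => simp

lemma push_surjective {α : I →+ J} {σ : S →+* T} (hα : Function.Surjective α)
    (hσ : Function.Surjective σ) : Function.Surjective (push α σ) := by
  intro f
  induction f using Finsupp.induction_linear with
  | zero => exact ⟨0, map_zero _⟩
  | add f g hf hg =>
    obtain ⟨x, rfl⟩ := hf
    obtain ⟨y, rfl⟩ := hg
    exact ⟨x + y, map_add _ _ _⟩
  | single j b =>
    obtain ⟨i, rfl⟩ := hα j
    obtain ⟨a, rfl⟩ := hσ b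
    exact ⟨Finsupp.single i a, push_single _ _ _ _⟩

lemma form_push {α : I →+ J} {σ : S →+* T} {d : I → S} {d' : J → T}
    (h : ∀ i, d' (α i) = σ (d i)) (f g : I →₀ S) :
    form d' (push α σ f) (push α σ g) = σ (form d f g) := by
  induction f using Finsupp.induction_linear with
  | zero => simp
  | add f f' hf hf' => simp [hf, hf']
  | single i a =>
    induction g using Finsupp.induction_linear with
    | zero => simp
    | add g g' hg hg' => simp only [map_add, hg, hg']
    | single j b => simp [← h]

end Form

section Group

variable {I J : Type*} [AddCommGroup I] [AddCommGroup J] {S T : Type*} [CommRing S] [CommRing T]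

/-- The extension of `(I →₀ S) ⋊ I` by the central group `S` with cocycle `form d`. -/
@[ext]
structure Hall (d : I → S) where
  /-- The central coordinate. -/
  z : S
  /-- The coordinate in the base of the wreath product. -/
  f : I →₀ S
  /-- The translation coordinate. -/
  n : I

namespace Hall

variable {d : I → S}

noncomputable instance : Mul (Hall d) :=
  ⟨fun x y => ⟨x.z + y.z + form d x.f (shift x.n y.f), x.f + shift x.n y.f, x.n + y.n⟩⟩

noncomputable instance : One (Hall d) := ⟨⟨0, 0, 0⟩⟩

noncomputable instance : Inv (Hall d) :=
  ⟨fun x => ⟨-x.z + form d x.f x.f, -shift (-x.n) x.f, -x.n⟩⟩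

lemma mul_def (x y : Hall d) :
    x * y = ⟨x.z + y.z + form d x.f (shift x.n y.f), x.f + shift x.n y.f, x.n + y.n⟩ := rfl

lemma one_def : (1 : Hall d) = ⟨0, 0, 0⟩ := rfl

lemma inv_def (x : Hall d) :
    x⁻¹ = ⟨-x.z + form d x.f x.f, -shift (-x.n) x.f, -x.n⟩ := rfl

noncomputable instance : Group (Hall d) :=
  Group.ofLeftAxioms
    (fun x y w => by
      simp only [mul_def, map_add, shift_shift, LinearMap.add_apply, Hall.mk.injEq]
      refine ⟨?_, by abel, by abel⟩
      rw [← form_shift d x.n y.f, shift_shift]; ring)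
    (fun x => by simp [mul_def, one_def])
    (fun x => by simp [mul_def, one_def, inv_def, form_shift])

/-- Conjugacy of `(z₁, f₁, n)` and `(z₂, f₂, n)` by an element without translation part. -/
def BaseConj (d : I → S) (n : I) (f₁ : I →₀ S) (z₁ : S) (f₂ : I →₀ S) (z₂ : S) : Prop :=
  ∃ h : I →₀ S, h + f₁ = f₂ + shift n h ∧ z₁ + form d h f₁ = z₂ + form d f₂ (shift n h)

lemma isConj_iff_baseConj (x y : Hall d) :
    IsConj x y ↔ x.n = y.n ∧ ∃ k, BaseConj d x.n (shift k x.f) x.z y.f y.z := by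
  rw [isConj_iff]
  simp only [mul_inv_eq_iff_eq_mul]
  constructor
  · rintro ⟨u, hu⟩
    simp only [mul_def, Hall.mk.injEq] at hu
    obtain ⟨hz, hf, hn⟩ := hu
    have hn' : x.n = y.n := by rw [add_comm] at hn; exact add_right_cancel hn
    refine ⟨hn', u.n, u.f, ?_, ?_⟩
    · rw [hf, hn']
    · rw [hn']; linear_combination hz
  · rintro ⟨hn, k, h, hf, hz⟩
    refine ⟨⟨0, h, k⟩, ?_⟩
    simp only [mul_def, Hall.mk.injEq]
    refine ⟨?_, ?_, by rw [hn, add_comm]⟩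
    · rw [← hn]; linear_combination hz
    · rw [hf, hn]

lemma baseConj_shift_self (n : I) (f₁ : I →₀ S) (z₁ : S) (f₂ : I →₀ S) (z₂ : S) :
    BaseConj d n (shift n f₁) z₁ f₂ z₂ ↔ BaseConj d n f₁ z₁ f₂ z₂ := by
  constructor
  · rintro ⟨h, hf, hz⟩
    have hh : h = f₂ + shift n (h - f₁) := by
      rw [map_sub, ← sub_eq_zero]
      rw [← sub_eq_zero] at hf
      rw [← hf]; abel
    refine ⟨h - f₁, by rw [sub_add_cancel]; exact hh, ?_⟩
    have h1 := form_shift d n (h - f₁) f₁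
    have h2 : form d h (shift n f₁) =
        form d f₂ (shift n f₁) + form d (shift n (h - f₁)) (shift n f₁) := by
      rw [← LinearMap.add_apply, ← map_add, ← hh]
    rw [map_sub (shift n) h f₁, map_sub (form d f₂)]
    linear_combination hz - h1 - h2
  · rintro ⟨h, hf, hz⟩
    refine ⟨h + f₁, by rw [map_add, ← add_assoc, ← hf], ?_⟩
    have h1 := form_shift d n h f₁
    rw [map_add (shift n), map_add (form d f₂), hf, map_add (form d), LinearMap.add_apply]
    linear_combination hz + h1

/-- Functoriality of the extension. -/
noncomputable def map {d' : J → T} (α : I →+ J) (σ : S →+* T) (h : ∀ i, d' (α i) = σ (d i)) :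
    Hall d →* Hall d' where
  toFun x := ⟨σ x.z, push α σ x.f, α x.n⟩
  map_one' := by simp [one_def]
  map_mul' x y := by simp [mul_def, push_shift, ← form_push h]

instance [Finite I] [Finite S] : Finite (Hall d) :=
  Finite.of_injective (fun x : Hall d => (x.z, (x.f : I → S), x.n)) fun x y h => by
    simp only [Prod.mk.injEq, DFunLike.coe_fn_eq] at h
    exact Hall.ext h.1 h.2.1 h.2.2

end Hall

end Group

section Presentation

variable {d : ℤ → ℤ}

/-- The image of a generator in `G_d`. -/
def gen (d : ℤ → ℤ) (x : Gen) : Gd d := PresentedGroup.of x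

lemma gen_t_conj (i : ℤ) :
    gen d .t * gen d (.a i) * (gen d .t)⁻¹ = gen d (.a (i + 1)) := by
  have h := PresentedGroup.one_of_mem (rels := rels d)
    (.inl <| .inl <| .inl <| .inl <| .inl ⟨i, rfl⟩)
  simp only [map_mul, map_inv] at h
  exact mul_inv_eq_one.mp h

lemma gen_t_conj_c (i : ℤ) :
    gen d .t * gen d (.c i) * (gen d .t)⁻¹ = gen d (.c i) := by
  have h := PresentedGroup.one_of_mem (rels := rels d)
    (.inl <| .inl <| .inl <| .inl <| .inr ⟨i, rfl⟩)
  simp only [map_mul, map_inv] at h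
  exact mul_inv_eq_one.mp h

lemma pcomm_gen_a (i j : ℤ) :
    pcomm (gen d (.a i)) (gen d (.a j)) = gen d (.c (i - j)) := by
  have h := PresentedGroup.one_of_mem (rels := rels d)
    (.inl <| .inl <| .inl <| .inr ⟨(i, j), rfl⟩)
  simp only [map_mul, map_inv, pcomm] at h
  exact mul_inv_eq_one.mp h

lemma pcomm_gen_c_a (i j : ℤ) : pcomm (gen d (.c i)) (gen d (.a j)) = 1 := by
  have h := PresentedGroup.one_of_mem (rels := rels d)
    (.inl <| .inl <| .inr ⟨(i, j), rfl⟩)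
  simp only [map_mul, map_inv, pcomm] at h
  exact h

lemma pcomm_gen_c_c (i j : ℤ) : pcomm (gen d (.c i)) (gen d (.c j)) = 1 := by
  have h := PresentedGroup.one_of_mem (rels := rels d)
    (.inl <| .inr ⟨(i, j), rfl⟩)
  simp only [map_mul, map_inv, pcomm] at h
  exact h

lemma gen_c (i : ℤ) : gen d (.c i) = gen d (.c 1) ^ d i := by
  have h := PresentedGroup.one_of_mem (rels := rels d) (.inr ⟨i, rfl⟩)
  simp only [map_mul, map_inv, map_zpow] at h
  exact mul_inv_eq_one.mp h

lemma gen_induction {p : Gd d → Prop} (h_gen : ∀ x, p (gen d x)) (h_one : p 1)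
    (h_mul : ∀ g h, p g → p h → p (g * h)) (h_inv : ∀ g, p g → p g⁻¹) (g : Gd d) : p g := by
  have hg : g ∈ Subgroup.closure (Set.range (PresentedGroup.of (rels := rels d))) := by
    rw [PresentedGroup.closure_range_of]; trivial
  induction hg using Subgroup.closure_induction with
  | mem x hx => obtain ⟨x, rfl⟩ := hx; exact h_gen x
  | one => exact h_one
  | mul g h _ _ hg hh => exact h_mul g h hg hh
  | inv g _ hg => exact h_inv g hg

lemma commute_of_pcomm {G : Type*} [Group G] {x y : G} (h : pcomm x y = 1) : Commute x y := by
  have : (y * x)⁻¹ * (x * y) = 1 := by simpa [pcomm, mul_assoc] using h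
  exact (inv_mul_eq_one.mp this).symm

lemma commute_gen_c (g : Gd d) : Commute g (gen d (.c 1)) := by
  induction g using gen_induction with
  | h_gen x =>
    cases x with
    | t => exact mul_inv_eq_iff_eq_mul.mp (gen_t_conj_c 1)
    | a i => exact (commute_of_pcomm (pcomm_gen_c_a 1 i)).symm
    | c i => exact commute_of_pcomm (pcomm_gen_c_c i 1)
  | h_one => exact Commute.one_left _
  | h_mul g h hg hh => exact hg.mul_left hh
  | h_inv g hg => exact hg.inv_left

lemma gen_t_zpow_conj (n i : ℤ) :
    gen d .t ^ n * gen d (.a i) * (gen d .t ^ n)⁻¹ = gen d (.a (n + i)) := by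
  induction n generalizing i with
  | zero => simp
  | succ n ih =>
    have : gen d .t ^ ((n : ℤ) + 1) * gen d (.a i) * (gen d .t ^ ((n : ℤ) + 1))⁻¹ =
        gen d .t ^ (n : ℤ) * (gen d .t * gen d (.a i) * (gen d .t)⁻¹) *
          (gen d .t ^ (n : ℤ))⁻¹ := by
      rw [zpow_add_one]; group
    rw [this, gen_t_conj, ih]
    congr 2; ring
  | pred n ih =>
    have h : gen d (.a (i - 1)) = (gen d .t)⁻¹ * gen d (.a i) * gen d .t := by
      have := gen_t_conj (d := d) (i - 1)
      rw [sub_add_cancel] at this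
      rw [← this]; group
    have : gen d .t ^ (-(n : ℤ) - 1) * gen d (.a i) * (gen d .t ^ (-(n : ℤ) - 1))⁻¹ =
        gen d .t ^ (-(n : ℤ)) * ((gen d .t)⁻¹ * gen d (.a i) * gen d .t) *
          (gen d .t ^ (-(n : ℤ)))⁻¹ := by
      rw [zpow_sub_one]; group
    rw [this, ← h, ih]
    congr 2; ring

/-- The image of a generator in the model of `G_d`. -/
noncomputable def genImage (d : ℤ → ℤ) : Gen → Hall d
  | .t => ⟨0, 0, 1⟩
  | .a i => ⟨0, Finsupp.single i 1, 0⟩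
  | .c i => ⟨2 * d i, 0, 0⟩

lemma central_zpow (z k : ℤ) : (⟨z, 0, 0⟩ : Hall d) ^ k = ⟨k * z, 0, 0⟩ := by
  let φ : Multiplicative ℤ →* Hall d :=
    { toFun := fun z => ⟨z.toAdd, 0, 0⟩
      map_one' := rfl
      map_mul' := fun x y => by simp [Hall.mul_def] }
  have := map_zpow φ (Multiplicative.ofAdd z) k
  rw [← ofAdd_zsmul, smul_eq_mul] at this
  exact this.symm

lemma base_zpow (h0 : d 0 = 0) (i k : ℤ) :
    (⟨0, Finsupp.single i 1, 0⟩ : Hall d) ^ k = ⟨0, Finsupp.single i k, 0⟩ := by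
  let φ : Multiplicative ℤ →* Hall d :=
    { toFun := fun z => ⟨0, Finsupp.single i z.toAdd, 0⟩
      map_one' := by simp [Hall.one_def]
      map_mul' := fun x y => by simp [Hall.mul_def, h0] }
  have := map_zpow φ (Multiplicative.ofAdd 1) k
  simpa [φ, ← ofAdd_zsmul] using this.symm

lemma translation_zpow (k : ℤ) : (⟨0, 0, 1⟩ : Hall d) ^ k = ⟨0, 0, k⟩ := by
  let φ : Multiplicative ℤ →* Hall d :=
    { toFun := fun z => ⟨0, 0, z.toAdd⟩
      map_one' := rfl
      map_mul' := fun x y => by simp [Hall.mul_def] }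
  have := map_zpow φ (Multiplicative.ofAdd 1) k
  simpa [φ, ← ofAdd_zsmul] using this.symm

lemma apply_zero_of_anti (hanti : ∀ i : ℤ, d (-i) = -d i) : d 0 = 0 := by
  have := hanti 0
  rw [neg_zero] at this
  lia

lemma lift_rels (hanti : ∀ i : ℤ, d (-i) = -d i) (hd1 : d 1 = 1)
    (r : FreeGroup Gen) (hr : r ∈ rels d) :
    FreeGroup.lift (genImage d) r = 1 := by
  have h0 := apply_zero_of_anti hanti
  rcases hr with ((((⟨i, rfl⟩ | ⟨i, rfl⟩) | ⟨⟨i, j⟩, rfl⟩) | ⟨⟨i, j⟩, rfl⟩) | ⟨⟨i, j⟩, rfl⟩) |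
    ⟨i, rfl⟩
  · simp [genImage, Hall.mul_def, Hall.inv_def, Hall.one_def, h0, add_comm]
  · simp [genImage, Hall.mul_def, Hall.inv_def, Hall.one_def]
  · have := hanti (i - j)
    rw [neg_sub] at this
    simp [pcomm, genImage, Hall.mul_def, Hall.inv_def, Hall.one_def, h0, this]
    ring
  · simp [pcomm, genImage, Hall.mul_def, Hall.inv_def, Hall.one_def, h0]
  · simp [pcomm, genImage, Hall.mul_def, Hall.inv_def, Hall.one_def]
  · simp only [map_mul, map_inv, map_zpow, FreeGroup.lift_apply_of, genImage, central_zpow, hd1]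
    simp [Hall.mul_def, Hall.inv_def, Hall.one_def]
    ring

/-- The embedding of `G_d` in its model; its image and the central coordinate generate the
model. -/
noncomputable def toHall (hanti : ∀ i : ℤ, d (-i) = -d i) (hd1 : d 1 = 1) : Gd d →* Hall d :=
  PresentedGroup.toGroup (f := genImage d) (lift_rels hanti hd1)

variable (hanti : ∀ i : ℤ, d (-i) = -d i) (hd1 : d 1 = 1)

lemma toHall_gen (x : Gen) : toHall hanti hd1 (gen d x) = genImage d x :=
  PresentedGroup.toGroup.of (h := lift_rels hanti hd1)

lemma exists_toHall_f_eq (f : ℤ →₀ ℤ) :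
    ∃ g, (toHall hanti hd1 g).f = f ∧ (toHall hanti hd1 g).n = 0 := by
  induction f using Finsupp.induction_linear with
  | zero => exact ⟨1, by simp [Hall.one_def]⟩
  | add f f' hf hf' =>
    obtain ⟨g, hg, hn⟩ := hf
    obtain ⟨g', hg', hn'⟩ := hf'
    exact ⟨g * g', by simp [Hall.mul_def, hg, hg', hn, hn']⟩
  | single i k =>
    refine ⟨gen d (.a i) ^ k, ?_⟩
    rw [map_zpow, toHall_gen, genImage, base_zpow (apply_zero_of_anti hanti)]
    exact ⟨rfl, rfl⟩

lemma exists_toHall_mul_central (x : Hall d) :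
    ∃ g z, x = toHall hanti hd1 g * ⟨z, 0, 0⟩ := by
  obtain ⟨g, hf, hn⟩ := exists_toHall_f_eq hanti hd1 x.f
  refine ⟨g * gen d .t ^ x.n, x.z - (toHall hanti hd1 g).z, ?_⟩
  rw [map_mul, map_zpow, toHall_gen, genImage, translation_zpow]
  ext <;> simp [Hall.mul_def, hf, hn]

lemma central_commute (z : ℤ) (x : Hall d) : Commute ⟨z, 0, 0⟩ x := by
  ext <;> simp [Hall.mul_def, add_comm]

/-- The central subgroup generated by `c 1`. -/
def center (d : ℤ → ℤ) : Subgroup (Gd d) := Subgroup.zpowers (gen d (.c 1))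

instance : (center d).Normal := by
  refine ⟨fun x hx g => ?_⟩
  obtain ⟨k, rfl⟩ := Subgroup.mem_zpowers_iff.mp hx
  rw [((commute_gen_c g).zpow_right k).eq, mul_inv_cancel_right]
  exact Subgroup.zpow_mem_zpowers _ k

lemma commute_gen_a_mod_center (i j : ℤ) :
    Commute (gen d (.a i) : Gd d ⧸ center d) (gen d (.a j)) := by
  apply commute_of_pcomm
  have : ((pcomm (gen d (.a i)) (gen d (.a j)) : Gd d) : Gd d ⧸ center d) = 1 := by
    rw [pcomm_gen_a, gen_c, QuotientGroup.eq_one_iff]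
    exact Subgroup.zpow_mem_zpowers _ _
  simpa [pcomm] using this

/-- The subgroup generated by the `a i` modulo `center d`. -/
abbrev baseSubgroup (d : ℤ → ℤ) : Subgroup (Gd d ⧸ center d) :=
  Subgroup.closure (Set.range fun i => (gen d (.a i) : Gd d ⧸ center d))

instance : CommGroup (baseSubgroup d) where
  mul_comm := (Subgroup.isMulCommutative_closure (by
    rintro _ ⟨i, rfl⟩ _ ⟨j, rfl⟩
    exact commute_gen_a_mod_center i j)).is_comm.comm

/-- The product of the `a i ^ f i` modulo `center d`. -/
noncomputable def baseHom (d : ℤ → ℤ) : (ℤ →₀ ℤ) →+ Additive (baseSubgroup d) :=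
  Finsupp.liftAddHom fun i => zmultiplesHom _ <|
    Additive.ofMul ⟨(gen d (.a i) : Gd d ⧸ center d), Subgroup.subset_closure ⟨i, rfl⟩⟩

/-- `baseHom` as a map to the quotient by `center d`. -/
noncomputable def baseElt (f : ℤ →₀ ℤ) : Gd d ⧸ center d := ((baseHom d f).toMul : _)

lemma baseElt_zero : baseElt (d := d) 0 = 1 := by simp [baseElt]

lemma baseElt_add (f g : ℤ →₀ ℤ) : baseElt (d := d) (f + g) = baseElt f * baseElt g := by
  simp only [baseElt, map_add, toMul_add]; rfl

lemma baseElt_neg (f : ℤ →₀ ℤ) : baseElt (d := d) (-f) = (baseElt f)⁻¹ := by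
  rw [eq_inv_iff_mul_eq_one, ← baseElt_add, neg_add_cancel, baseElt_zero]

lemma baseElt_single (i k : ℤ) :
    baseElt (d := d) (Finsupp.single i k) = (gen d (.a i) : Gd d ⧸ center d) ^ k := by
  simp [baseElt, baseHom]

lemma baseElt_shift (n : ℤ) (f : ℤ →₀ ℤ) :
    baseElt (d := d) (shift n f) =
      (gen d .t : Gd d ⧸ center d) ^ n * baseElt f * ((gen d .t : Gd d ⧸ center d) ^ n)⁻¹ := by
  induction f using Finsupp.induction_linear with
  | zero => simp [baseElt_zero]
  | add f g hf hg => rw [map_add, baseElt_add, hf, hg, baseElt_add]; group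
  | single i k =>
    rw [shift_single, baseElt_single, baseElt_single, ← conj_zpow, ← gen_t_zpow_conj n i]
    simp

lemma mk_eq_baseElt_mul (g : Gd d) :
    (g : Gd d ⧸ center d) = baseElt (toHall hanti hd1 g).f *
      (gen d .t : Gd d ⧸ center d) ^ (toHall hanti hd1 g).n := by
  induction g using gen_induction with
  | h_gen x =>
    rw [toHall_gen]
    cases x with
    | t => simp [genImage, baseElt_zero]
    | a i => simp [genImage, baseElt_single]
    | c i =>
      simp only [genImage, baseElt_zero, zpow_zero, mul_one, QuotientGroup.eq_one_iff]
      rw [gen_c]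
      exact Subgroup.zpow_mem_zpowers _ _
  | h_one => simp [Hall.one_def, baseElt_zero]
  | h_mul g h hg hh =>
    rw [QuotientGroup.mk_mul, hg, hh, map_mul, Hall.mul_def]
    simp only [baseElt_add, baseElt_shift, zpow_add]
    group
  | h_inv g hg =>
    rw [QuotientGroup.mk_inv, hg, map_inv, Hall.inv_def]
    simp only [baseElt_neg, baseElt_shift]
    group

lemma toHall_injective : Function.Injective (toHall hanti hd1) := by
  rw [injective_iff_map_eq_one]
  intro g hg
  have h := mk_eq_baseElt_mul hanti hd1 g
  simp only [hg, Hall.one_def, baseElt_zero, zpow_zero, mul_one, QuotientGroup.eq_one_iff] at h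
  obtain ⟨k, rfl⟩ := Subgroup.mem_zpowers_iff.mp h
  rw [map_zpow, toHall_gen, genImage, central_zpow, hd1, Hall.one_def, Hall.mk.injEq] at hg
  have : k = 0 := by lia
  rw [this, zpow_zero]

lemma isConj_toHall_iff (g₁ g₂ : Gd d) :
    IsConj (toHall hanti hd1 g₁) (toHall hanti hd1 g₂) ↔ IsConj g₁ g₂ := by
  refine ⟨fun h => ?_, fun h => MonoidHom.map_isConj _ h⟩
  obtain ⟨x, hx⟩ := isConj_iff.mp h
  obtain ⟨g, z, rfl⟩ := exists_toHall_mul_central hanti hd1 x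
  refine isConj_iff.mpr ⟨g, toHall_injective hanti hd1 ?_⟩
  rw [map_mul, map_mul, map_inv, ← hx, mul_assoc _ (⟨z, 0, 0⟩ : Hall d),
    (central_commute z _).eq]
  group

end Presentation

section Reduction

/-- `p q P` holds for all `q` divisible enough, and then for all `P` divisible enough. -/
def EventuallyDvd (p : ℕ → ℕ → Prop) : Prop :=
  ∃ N > 0, ∀ q > 0, N ∣ q → ∃ M > 0, ∀ P > 0, M ∣ P → p q P

namespace EventuallyDvd

lemma mono {p p' : ℕ → ℕ → Prop} (hp : EventuallyDvd p)
    (h : ∀ q P, 0 < q → 0 < P → p q P → p' q P) : EventuallyDvd p' := by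
  obtain ⟨N, hN, H⟩ := hp
  refine ⟨N, hN, fun q hq hNq => ?_⟩
  obtain ⟨M, hM, H⟩ := H q hq hNq
  exact ⟨M, hM, fun P hP hMP => h q P hq hP (H P hP hMP)⟩

lemma and {p p' : ℕ → ℕ → Prop} (hp : EventuallyDvd p) (hp' : EventuallyDvd p') :
    EventuallyDvd fun q P => p q P ∧ p' q P := by
  obtain ⟨N, hN, H⟩ := hp
  obtain ⟨N', hN', H'⟩ := hp'
  refine ⟨N * N', Nat.mul_pos hN hN', fun q hq hNq => ?_⟩
  obtain ⟨M, hM, H⟩ := H q hq ((dvd_mul_right _ _).trans hNq)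
  obtain ⟨M', hM', H'⟩ := H' q hq ((dvd_mul_left _ _).trans hNq)
  exact ⟨M * M', Nat.mul_pos hM hM', fun P hP hMP =>
    ⟨H P hP ((dvd_mul_right _ _).trans hMP), H' P hP ((dvd_mul_left _ _).trans hMP)⟩⟩

lemma of_forall {p : ℕ → ℕ → Prop} (h : ∀ q P, 0 < q → 0 < P → p q P) : EventuallyDvd p :=
  ⟨1, one_pos, fun q hq _ => ⟨1, one_pos, fun P hP _ => h q P hq hP⟩⟩

lemma forall_mem {ι : Type*} (F : Finset ι) {p : ι → ℕ → ℕ → Prop}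
    (h : ∀ i ∈ F, EventuallyDvd (p i)) : EventuallyDvd fun q P => ∀ i ∈ F, p i q P := by
  classical
  induction F using Finset.induction_on with
  | empty => exact of_forall (by simp)
  | insert i F _ ih =>
    refine ((h i (F.mem_insert_self i)).and
      (ih fun j hj => h j (Finset.mem_insert_of_mem hj))).mono ?_
    simp

lemma exists_pair {p : ℕ → ℕ → Prop} (h : EventuallyDvd p) : ∃ q P, 0 < q ∧ 0 < P ∧ p q P := by
  obtain ⟨N, hN, H⟩ := h
  obtain ⟨M, hM, H⟩ := H N hN dvd_rfl
  exact ⟨N, M, hN, hM, H M hM dvd_rfl⟩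

lemma dvd_modulus {N : ℕ} (hN : 0 < N) : EventuallyDvd fun q _ => N ∣ q :=
  ⟨N, hN, fun _ _ hq => ⟨1, one_pos, fun _ _ _ => hq⟩⟩

lemma dvd_period {M : ℕ → ℕ} (hM : ∀ q > 0, 0 < M q) : EventuallyDvd fun q P => M q ∣ P :=
  ⟨1, one_pos, fun q hq _ => ⟨M q, hM q hq, fun _ _ h => h⟩⟩

lemma not_dvd_of_dvd {v : ℤ} (hv : v ≠ 0) {q : ℕ} (h : 2 * v.natAbs ∣ q) : ¬ (q : ℤ) ∣ v := by
  intro hq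
  have h1 := Nat.le_of_dvd (Int.natAbs_pos.mpr hv) (h.trans (Int.natCast_dvd.mp hq))
  have := Int.natAbs_pos.mpr hv
  lia

lemma modulus_ne_zero {v : ℤ} (hv : v ≠ 0) : EventuallyDvd fun q _ => (v : ZMod q) ≠ 0 := by
  refine (dvd_modulus (N := 2 * v.natAbs) (by positivity)).mono fun q _ _ _ h => ?_
  rw [Ne, ZMod.intCast_zmod_eq_zero_iff_dvd]
  exact not_dvd_of_dvd hv h

lemma period_ne_zero {v : ℤ} (hv : v ≠ 0) : EventuallyDvd fun _ P => (v : ZMod P) ≠ 0 := by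
  refine (dvd_period (M := fun _ => 2 * v.natAbs) fun _ _ => by positivity).mono
    fun _ q _ _ h => ?_
  rw [Ne, ZMod.intCast_zmod_eq_zero_iff_dvd]
  exact not_dvd_of_dvd hv h

end EventuallyDvd

/-- Reduction of the index modulo `P` and of the coefficients modulo `q`. -/
noncomputable def reduce (q P : ℕ) : (ℤ →₀ ℤ) →+ (ZMod P →₀ ZMod q) :=
  push (Int.castAddHom (ZMod P)) (Int.castRingHom (ZMod q))

lemma reduce_shift (q P : ℕ) (k : ℤ) (f : ℤ →₀ ℤ) :
    reduce q P (shift k f) = shift (k : ZMod P) (reduce q P f) :=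
  push_shift _ _ _ _

lemma reduce_surjective (q P : ℕ) : Function.Surjective (reduce q P) :=
  push_surjective ZMod.intCast_surjective ZMod.intCast_surjective

lemma eventually_reduce_apply_ne_zero {f : ℤ →₀ ℤ} {i : ℤ} (hi : f i ≠ 0) :
    EventuallyDvd fun q P => reduce q P f i ≠ 0 := by
  refine ((EventuallyDvd.modulus_ne_zero hi).and (EventuallyDvd.forall_mem (f.support.erase i)
    (p := fun j _ P => ((j - i : ℤ) : ZMod P) ≠ 0) fun j hj =>
      EventuallyDvd.period_ne_zero (sub_ne_zero.mpr (Finset.ne_of_mem_erase hj)))).mono ?_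
  rintro q P - - ⟨hq, hP⟩
  rw [reduce, push_apply, Finset.sum_eq_single i]
  · simpa using hq
  · intro j hj hji
    have := hP j (Finset.mem_erase.mpr ⟨hji, hj⟩)
    rw [Int.cast_sub, sub_ne_zero] at this
    simp [this]
  · simp [hi]

lemma eventually_reduce_ne_zero {f : ℤ →₀ ℤ} (hf : f ≠ 0) :
    EventuallyDvd fun q P => reduce q P f ≠ 0 := by
  obtain ⟨i, hi⟩ := Finsupp.ne_iff.mp hf
  refine (eventually_reduce_apply_ne_zero hi).mono fun q P _ _ h h0 => h ?_
  rw [h0, Finsupp.zero_apply]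

lemma exists_mem_support_of_reduce_ne_zero {q P : ℕ} {f : ℤ →₀ ℤ} {u : ZMod P}
    (h : reduce q P f u ≠ 0) : ∃ j ∈ f.support, (j : ZMod P) = u := by
  rw [reduce, push_apply] at h
  obtain ⟨j, hj, h⟩ := Finset.exists_ne_zero_of_sum_ne_zero h
  exact ⟨j, hj, by simpa using (ite_ne_right_iff.mp h).1⟩

/-- The image of `h ↦ h - shift n h`. -/
noncomputable def coboundaries {I S : Type*} [AddCommGroup I] [CommRing S] (n : I) :
    Submodule S (I →₀ S) :=
  LinearMap.range (LinearMap.id - shift n)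

lemma single_sub_single_mem_coboundaries (n i l a : ℤ) :
    Finsupp.single i a - Finsupp.single (n * l + i) a ∈ coboundaries (S := ℤ) n := by
  have step (i : ℤ) : Finsupp.single i a - Finsupp.single (n + i) a ∈ coboundaries (S := ℤ) n :=
    ⟨Finsupp.single i a, by simp⟩
  induction l with
  | zero => simp
  | succ l ih =>
    have := add_mem ih (step (n * l + i))
    rwa [sub_add_sub_cancel, ← add_assoc, show n + n * l + i = n * (l + 1) + i by ring] at this
  | pred l ih =>
    have := sub_mem ih (step (n * (-l - 1) + i))
    rwa [show n + (n * (-l - 1) + i) = n * -l + i by ring, sub_sub_sub_cancel_right] at this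

lemma mem_coboundaries_of_push_eq_zero {n : ℤ} (f : ℤ →₀ ℤ)
    (h : push (Int.castAddHom (ZMod n.natAbs)) (RingHom.id ℤ) f = 0) :
    f ∈ coboundaries (S := ℤ) n := by
  let rep : (ZMod n.natAbs →₀ ℤ) →ₗ[ℤ] (ℤ →₀ ℤ) := Finsupp.lmapDomain ℤ ℤ (ZMod.cast : _ → ℤ)
  have key (f : ℤ →₀ ℤ) :
      f - rep (push (Int.castAddHom (ZMod n.natAbs)) (RingHom.id ℤ) f) ∈
        coboundaries (S := ℤ) n := by
    induction f using Finsupp.induction_linear with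
    | zero => simp
    | add f g hf hg => simpa only [map_add, add_sub_add_comm] using add_mem hf hg
    | single i a =>
      have h1 := single_sub_single_mem_coboundaries n i (-(n.sign * (i / n.natAbs))) a
      have h2 : n * -(n.sign * (i / n.natAbs)) + i = i % n.natAbs := by
        have := Int.emod_add_mul_ediv i n.natAbs
        have h3 := Int.mul_sign_self n
        rw [mul_neg, ← mul_assoc, h3]
        lia
      rw [h2] at h1
      simpa [rep, ZMod.coe_intCast] using h1
  simpa [h] using key f

lemma eventually_reduce_notMem_coboundaries {n : ℤ} (hn : n ≠ 0) {f : ℤ →₀ ℤ}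
    (hf : f ∉ coboundaries (S := ℤ) n) :
    EventuallyDvd fun q P => reduce q P f ∉ coboundaries (S := ZMod q) (n : ZMod P) := by
  obtain ⟨u, hu⟩ := Finsupp.ne_iff.mp (mt (mem_coboundaries_of_push_eq_zero f) hf)
  refine ((EventuallyDvd.modulus_ne_zero hu).and
    (EventuallyDvd.dvd_period (M := fun _ => n.natAbs) fun _ _ => Int.natAbs_pos.mpr hn)).mono ?_
  rintro q P - - ⟨hq, hP⟩ ⟨h, hh⟩
  apply hq
  have h1 : push (ZMod.castHom hP (ZMod n.natAbs)).toAddMonoidHom (RingHom.id (ZMod q))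
      (reduce q P f) = 0 := by
    have hn0 : (n : ZMod n.natAbs) = 0 :=
      (ZMod.intCast_zmod_eq_zero_iff_dvd _ _).mpr Int.natAbs_dvd_self
    rw [← hh]
    simp [push_shift, hn0]
  have h2 : push (AddMonoidHom.id _) (Int.castRingHom (ZMod q))
      (push (Int.castAddHom (ZMod n.natAbs)) (RingHom.id ℤ) f) = 0 := by
    rw [← h1, reduce, push_push, push_push]
    congr 2
    ext
    simp [ZMod.cast_one hP]
  have h3 := DFunLike.congr_fun h2 u
  rw [push_apply] at h3
  simp only [AddMonoidHom.id_apply, Finset.sum_ite_eq', Finsupp.mem_support_iff] at h3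
  exact (if_pos hu).symm.trans h3

variable {d : ℤ → ℤ}

/-- The reduction of `d` modulo `q` as a function on `ZMod P`; it is only meaningful if
`d` modulo `q` has period `P`. -/
def cyc (d : ℤ → ℤ) (q P : ℕ) (u : ZMod P) : ZMod q := d (u.cast : ℤ)

/-- `P` is a period of `d` modulo `q`. -/
def IsPeriod (d : ℤ → ℤ) (q P : ℕ) : Prop := Function.Periodic (fun i => (d i : ZMod q)) P

lemma IsPeriod.of_dvd {q P P' : ℕ} (h : IsPeriod d q P) (hP : P ∣ P') : IsPeriod d q P' := by
  obtain ⟨k, rfl⟩ := hP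
  have := Function.Periodic.nat_mul h k
  rw [mul_comm] at this
  simpa [IsPeriod] using this

lemma cyc_intCast {q P : ℕ} (h : IsPeriod d q P) (i : ℤ) :
    cyc d q P (i : ZMod P) = (d i : ZMod q) := by
  have h1 := Function.Periodic.int_mul h (i / P) (i % P)
  have h2 := Int.emod_add_mul_ediv i P
  rw [cyc, ZMod.coe_intCast]
  rw [mul_comm] at h2
  simp only [Int.cast_eq] at h1
  rw [h2] at h1
  exact h1.symm

lemma sum_eq_zero_of_periodic {q P r : ℕ} [NeZero P] (F : ZMod P → ZMod q)
    (hF : Function.Periodic F (r : ZMod P)) (hr : r * q ∣ P) : ∑ u, F u = 0 := by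
  have h1 : ∑ u, F u = ∑ k ∈ Finset.range P, F (k : ZMod P) := by
    obtain ⟨m, rfl⟩ := Nat.exists_eq_succ_of_ne_zero (NeZero.ne P)
    rw [← Fin.sum_univ_eq_sum_range (fun k => F (k : ZMod (m + 1)))]
    refine Finset.sum_congr rfl fun u _ => ?_
    congr 1
    exact (ZMod.natCast_zmod_val u).symm
  have h2 (L : ℕ) : ∑ k ∈ Finset.range (L * r), F (k : ZMod P) =
      L * ∑ k ∈ Finset.range r, F (k : ZMod P) := by
    induction L with
    | zero => simp
    | succ L ih =>
      rw [add_mul, one_mul, Finset.sum_range_add, ih, Nat.cast_succ, add_mul, one_mul]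
      congr 1
      refine Finset.sum_congr rfl fun k _ => ?_
      have := hF.nat_mul L k
      rw [← this]
      push_cast
      rw [add_comm]
  obtain ⟨L, hL⟩ := hr
  have h3 := h2 (q * L)
  rw [show q * L * r = P by rw [hL]; ring] at h3
  rw [h1, h3]
  simp

lemma form_eq_zero_of_shift_eq {q P P₀ : ℕ} [NeZero P] {n : ℤ} (hP₀ : IsPeriod d q P₀)
    (hP : n.natAbs * P₀ * q ∣ P) {s : ZMod P →₀ ZMod q} (hs : shift (n : ZMod P) s = s)
    (g : ZMod P →₀ ZMod q) : form (cyc d q P) s g = 0 := by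
  have hdvd : P₀ ∣ P := ((dvd_mul_left _ _).trans (dvd_mul_right _ _)).trans hP
  have hsn : Function.Periodic s (n : ZMod P) := fun u => by
    conv_lhs => rw [← hs, add_comm]
    exact shift_apply_add _ _ _
  have hsr : Function.Periodic s ((n.natAbs * P₀ : ℕ) : ZMod P) := by
    have := hsn.int_mul (n.sign * P₀)
    convert this using 1
    rw [← Int.cast_natCast (R := ZMod P), ← Int.cast_mul]
    congr 1
    push_cast
    rw [← Int.sign_mul_self_eq_abs]
    ring
  have hdr : Function.Periodic (cyc d q P) ((n.natAbs * P₀ : ℕ) : ZMod P) := fun u => by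
    obtain ⟨i, rfl⟩ := ZMod.intCast_surjective u
    rw [← Int.cast_natCast (R := ZMod P), ← Int.cast_add, cyc_intCast (hP₀.of_dvd hdvd),
      cyc_intCast (hP₀.of_dvd hdvd)]
    exact hP₀.of_dvd (dvd_mul_left _ _) i
  induction g using Finsupp.induction_linear with
  | zero => simp
  | add g g' hg hg' => simp [hg, hg']
  | single j b =>
    have h1 : form (cyc d q P) s (Finsupp.single j b) = ∑ u, s u * (b * cyc d q P (u - j)) := by
      rw [form, Finsupp.linearCombination_apply, Finsupp.sum_fintype _ _ (by simp)]
      simp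
    rw [h1]
    refine sum_eq_zero_of_periodic _ (fun u => ?_) hP
    rw [hsr u, add_sub_right_comm, hdr]

lemma cyc_neg (hanti : ∀ i : ℤ, d (-i) = -d i) {q P : ℕ} (h : IsPeriod d q P) (u : ZMod P) :
    cyc d q P (-u) = -cyc d q P u := by
  obtain ⟨i, rfl⟩ := ZMod.intCast_surjective u
  rw [← Int.cast_neg, cyc_intCast h, cyc_intCast h, hanti, Int.cast_neg]

lemma form_reduce {q P : ℕ} (h : IsPeriod d q P) (f g : ℤ →₀ ℤ) :
    form (cyc d q P) (reduce q P f) (reduce q P g) = (form d f g : ZMod q) :=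
  form_push (cyc_intCast h) f g

lemma eventually_isPeriod (hper : ∀ q : ℕ, 0 < q → ∃ P : ℕ, 0 < P ∧ IsPeriod d q P) :
    EventuallyDvd (IsPeriod d) :=
  ⟨1, one_pos, fun q hq _ => by
    obtain ⟨P, hP, h⟩ := hper q hq
    exact ⟨P, hP, fun _ _ hdvd => h.of_dvd hdvd⟩⟩

lemma eventually_form_eq_zero (hper : ∀ q : ℕ, 0 < q → ∃ P : ℕ, 0 < P ∧ IsPeriod d q P)
    {n : ℤ} (hn : n ≠ 0) :
    EventuallyDvd fun q P => ∀ s : ZMod P →₀ ZMod q, shift (n : ZMod P) s = s →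
      ∀ g, form (cyc d q P) s g = 0 :=
  ⟨1, one_pos, fun q hq _ => by
    obtain ⟨P₀, hP₀, h⟩ := hper q hq
    refine ⟨n.natAbs * P₀ * q, by positivity, fun P hP hdvd s hs g => ?_⟩
    have : NeZero P := ⟨hP.ne'⟩
    exact form_eq_zero_of_shift_eq h hdvd hs g⟩

/-- An integer outside a subgroup of `ℤ` stays outside modulo a suitable positive modulus. -/
lemma exists_modulus_of_notMem (K : AddSubgroup ℤ) {v : ℤ} (hv : v ∉ K) :
    ∃ N : ℕ, 0 < N ∧ (∀ x ∈ K, (N : ℤ) ∣ x) ∧ ¬ (N : ℤ) ∣ v := by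
  obtain ⟨r, rfl⟩ := Int.subgroup_cyclic K
  simp only [← AddSubgroup.zmultiples_eq_closure, Int.mem_zmultiples_iff] at hv ⊢
  obtain rfl | hr := eq_or_ne r 0
  · have hv0 : v ≠ 0 := by simpa using hv
    exact ⟨2 * v.natAbs, by positivity, by simp,
      EventuallyDvd.not_dvd_of_dvd hv0 dvd_rfl⟩
  · exact ⟨r.natAbs, by positivity, fun x hx => Int.natAbs_dvd.mpr hx,
      fun h => hv (Int.natAbs_dvd.mp h)⟩

open Hall

lemma eventually_not_baseConj_zero
    (hper : ∀ q : ℕ, 0 < q → ∃ P : ℕ, 0 < P ∧ IsPeriod d q P)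
    {f₁ f₂ : ℤ →₀ ℤ} {z₁ z₂ : ℤ} (h : ¬ BaseConj d 0 f₁ z₁ f₂ z₂) :
    EventuallyDvd fun q P => ¬ BaseConj (cyc d q P) 0 (reduce q P f₁) z₁ (reduce q P f₂) z₂ := by
  by_cases hf : f₁ = f₂
  · subst hf
    let K : AddSubgroup ℤ := (LinearMap.range ((form d).flip f₁ - form d f₁)).toAddSubgroup
    have hK : z₂ - z₁ ∉ K := by
      rintro ⟨x, hx⟩
      simp only [LinearMap.sub_apply, LinearMap.flip_apply] at hx
      exact h ⟨x, by rw [shift_zero, add_comm], by rw [shift_zero]; linear_combination hx⟩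
    obtain ⟨N, hN, hNK, hNz⟩ := exists_modulus_of_notMem K hK
    refine ((eventually_isPeriod hper).and (EventuallyDvd.dvd_modulus hN)).mono ?_
    rintro q P - - ⟨hP, hq⟩ ⟨x, -, hx⟩
    obtain ⟨x, rfl⟩ := reduce_surjective q P x
    rw [shift_zero, form_reduce hP, form_reduce hP] at hx
    have h1 : (q : ℤ) ∣ (z₂ - z₁) - (form d x f₁ - form d f₁ x) := by
      rw [← ZMod.intCast_zmod_eq_zero_iff_dvd]
      push_cast
      linear_combination -hx
    have h2 : (N : ℤ) ∣ form d x f₁ - form d f₁ x := hNK _ ⟨x, rfl⟩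
    exact hNz ((dvd_sub_left h2).mp ((Int.natCast_dvd_natCast.mpr hq).trans h1))
  · refine (eventually_reduce_ne_zero (sub_ne_zero.mpr hf)).mono ?_
    rintro q P - - h ⟨x, hx, -⟩
    rw [shift_zero, add_comm] at hx
    rw [map_sub, add_right_cancel hx, sub_self] at h
    exact h rfl

lemma eventually_not_baseConj_ne_zero (hanti : ∀ i : ℤ, d (-i) = -d i)
    (hper : ∀ q : ℕ, 0 < q → ∃ P : ℕ, 0 < P ∧ IsPeriod d q P) {n : ℤ} (hn : n ≠ 0)
    {f₁ f₂ : ℤ →₀ ℤ} {z₁ z₂ : ℤ} (h : ¬ BaseConj d n f₁ z₁ f₂ z₂) :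
    EventuallyDvd fun q P =>
      ¬ BaseConj (cyc d q P) (n : ZMod P) (reduce q P f₁) z₁ (reduce q P f₂) z₂ := by
  by_cases hf : f₂ - f₁ ∈ coboundaries (S := ℤ) n
  · obtain ⟨x, hx⟩ := hf
    have hx' : x + f₁ = f₂ + shift n x := by
      simp only [LinearMap.sub_apply, LinearMap.id_apply] at hx
      rw [← sub_eq_zero, ← sub_eq_zero.mpr hx]; abel
    have hz : z₁ + form d x f₁ - (z₂ + form d f₂ (shift n x)) ≠ 0 :=
      fun hz => h ⟨x, hx', sub_eq_zero.mp hz⟩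
    refine (((eventually_isPeriod hper).and (eventually_form_eq_zero hper hn)).and
      (EventuallyDvd.modulus_ne_zero hz)).mono ?_
    rintro q P - - ⟨⟨hP, hform⟩, hq⟩ ⟨y, hy, hyz⟩
    apply hq
    obtain ⟨s, rfl⟩ : ∃ s, y = reduce q P x + s := ⟨y - reduce q P x, by abel⟩
    have hx'' := congrArg (reduce q P) hx'
    rw [map_add, map_add, reduce_shift] at hx''
    have hs : shift (n : ZMod P) s = s := by
      rw [map_add, ← add_assoc, ← hx''] at hy
      rw [← sub_eq_zero, ← sub_eq_zero.mpr hy.symm]; abel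
    have h1 := hform s hs (reduce q P f₁)
    have h2 := hform s hs (reduce q P f₂)
    rw [form_swap (cyc_neg hanti hP), neg_eq_zero] at h2
    rw [map_add (shift _), hs, ← reduce_shift, map_add, map_add, LinearMap.add_apply,
      form_reduce hP, form_reduce hP, h1, h2] at hyz
    push_cast
    linear_combination hyz
  · refine (eventually_reduce_notMem_coboundaries hn hf).mono ?_
    rintro q P - - h ⟨x, hx, -⟩
    refine h ⟨x, ?_⟩
    rw [map_sub, LinearMap.sub_apply, LinearMap.id_apply, ← sub_eq_zero, ← sub_eq_zero.mpr hx]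
    abel

/-- Only finitely many translations matter for conjugacy in the finite quotients. -/
lemma exists_finset_translations (n : ℤ) (f₁ f₂ : ℤ →₀ ℤ) (z₁ z₂ : ℤ) :
    ∃ F : Finset ℤ, EventuallyDvd fun q P => ∀ k : ZMod P,
      BaseConj (cyc d q P) (n : ZMod P) (shift k (reduce q P f₁)) z₁ (reduce q P f₂) z₂ →
      ∃ l ∈ F, BaseConj (cyc d q P) (n : ZMod P) (shift (l : ZMod P) (reduce q P f₁)) z₁
        (reduce q P f₂) z₂ := by
  obtain rfl | hn := eq_or_ne n 0
  · obtain rfl | hf := eq_or_ne f₁ 0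
    · exact ⟨{0}, .of_forall fun q P _ _ k h => ⟨0, by simp, by simpa using h⟩⟩
    · obtain ⟨i, hi⟩ := Finsupp.ne_iff.mp hf
      refine ⟨f₂.support.image (· - i), (eventually_reduce_apply_ne_zero hi).mono ?_⟩
      intro q P _ _ hi k hk
      have hk' : shift k (reduce q P f₁) = reduce q P f₂ := by
        obtain ⟨x, hx, -⟩ := hk
        rw [Int.cast_zero, shift_zero, add_comm] at hx
        exact add_right_cancel hx
      rw [← shift_apply_add k, hk'] at hi
      obtain ⟨j, hj, hji⟩ := exists_mem_support_of_reduce_ne_zero hi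
      refine ⟨j - i, Finset.mem_image_of_mem _ hj, ?_⟩
      rwa [Int.cast_sub, hji, add_sub_cancel_right]
  · refine ⟨Finset.Ico 0 |n|, .of_forall fun q P _ _ k hk => ?_⟩
    obtain ⟨k, rfl⟩ := ZMod.intCast_surjective k
    refine ⟨k % n, ?_, ?_⟩
    · rw [Finset.mem_Ico]
      exact ⟨Int.emod_nonneg _ hn, Int.emod_lt_abs _ hn⟩
    · have hp : Function.Periodic (fun k : ZMod P => BaseConj (cyc d q P) (n : ZMod P)
          (shift k (reduce q P f₁)) z₁ (reduce q P f₂) z₂) (n : ZMod P) := fun k => by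
        beta_reduce
        rw [add_comm, ← shift_shift, baseConj_shift_self]
      have := hp.int_mul (k / n) (k % n : ℤ)
      rw [← this]
      convert hk using 2
      rw [← Int.cast_mul, ← Int.cast_add, mul_comm, Int.emod_add_mul_ediv]

/-- The homomorphism to the finite model attached to a period. -/
noncomputable def reduceHom {q P : ℕ} (h : IsPeriod d q P) : Hall d →* Hall (cyc d q P) :=
  Hall.map (Int.castAddHom (ZMod P)) (Int.castRingHom (ZMod q)) (cyc_intCast h)

theorem eventually_not_isConj (hanti : ∀ i : ℤ, d (-i) = -d i)
    (hper : ∀ q : ℕ, 0 < q → ∃ P : ℕ, 0 < P ∧ IsPeriod d q P) {x y : Hall d}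
    (hxy : ¬ IsConj x y) :
    EventuallyDvd fun q P => ∀ h : IsPeriod d q P, ¬ IsConj (reduceHom h x) (reduceHom h y) := by
  simp only [isConj_iff_baseConj, not_and, not_exists] at hxy ⊢
  by_cases hn : x.n = y.n
  · obtain ⟨F, hF⟩ := exists_finset_translations (d := d) x.n x.f y.f x.z y.z
    have hF' : EventuallyDvd fun q P => ∀ l ∈ F, ¬ BaseConj (cyc d q P) (x.n : ZMod P)
        (reduce q P (shift l x.f)) x.z (reduce q P y.f) y.z := by
      refine .forall_mem F fun l _ => ?_
      have hl := hxy hn l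
      obtain h0 | h0 := eq_or_ne x.n 0
      · rw [h0] at hl ⊢
        simpa using eventually_not_baseConj_zero hper hl
      · exact eventually_not_baseConj_ne_zero hanti hper h0 hl
    refine (hF.and hF').mono ?_
    rintro q P - - ⟨hF, hF'⟩ h - k hk
    obtain ⟨l, hl, hlc⟩ := hF k hk
    rw [← reduce_shift] at hlc
    exact hF' l hl hlc
  · refine (EventuallyDvd.period_ne_zero (sub_ne_zero.mpr hn)).mono ?_
    intro q P _ _ hP h heq
    rw [Int.cast_sub, sub_ne_zero] at hP
    exact (hP heq).elim

theorem exists_normal_of_not_isConj (hanti : ∀ i : ℤ, d (-i) = -d i) (hd1 : d 1 = 1)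
    (hper : ∀ q : ℕ, 0 < q → ∃ P : ℕ, 0 < P ∧ IsPeriod d q P) {g₁ g₂ : Gd d}
    (hg : ¬ IsConj g₁ g₂) :
    ∃ N : Subgroup (Gd d), N.Normal ∧ N.FiniteIndex ∧ ∀ h : Gd d, h * g₁ * h⁻¹ * g₂⁻¹ ∉ N := by
  rw [← isConj_toHall_iff hanti hd1] at hg
  obtain ⟨q, P, hq, hP, h, hconj⟩ :=
    ((eventually_isPeriod hper).and (eventually_not_isConj hanti hper hg)).exists_pair
  have : NeZero q := ⟨hq.ne'⟩
  have : NeZero P := ⟨hP.ne'⟩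
  let φ := (reduceHom h).comp (toHall hanti hd1)
  refine ⟨φ.ker, inferInstance, inferInstance, fun x hx => hconj h ?_⟩
  rw [MonoidHom.mem_ker, map_mul, map_inv, mul_inv_eq_one, map_mul, map_mul, map_inv] at hx
  exact isConj_iff.mpr ⟨φ x, hx⟩

end Reduction

section Periodicity

variable {d : ℤ → ℤ}

lemma isPeriod_iff_dvd {q P : ℕ} : IsPeriod d q P ↔ ∀ i : ℤ, (q : ℤ) ∣ d (i + P) - d i := by
  refine forall_congr' fun i => ?_
  rw [← ZMod.intCast_zmod_eq_zero_iff_dvd, Int.cast_sub, sub_eq_zero]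

lemma IsPeriod.of_modulus_dvd {q q' P : ℕ} (h : IsPeriod d q P) (hq : q' ∣ q) :
    IsPeriod d q' P := by
  rw [isPeriod_iff_dvd] at h ⊢
  exact fun i => (Int.natCast_dvd_natCast.mpr hq).trans (h i)

/-- Periodicity modulo prime powers implies periodicity modulo every positive integer. -/
lemma exists_isPeriod_of_prime_pow
    (h : ∀ p k : ℕ, p.Prime → ∃ P : ℕ, 0 < P ∧ IsPeriod d (p ^ (k + 1)) P) (q : ℕ) (hq : 0 < q) :
    ∃ P : ℕ, 0 < P ∧ IsPeriod d q P := by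
  induction q using Nat.recOnPosPrimePosCoprime with
  | prime_pow p n hp hn =>
    obtain ⟨k, rfl⟩ := Nat.exists_eq_succ_of_ne_zero hn.ne'
    exact h p k hp
  | zero => exact absurd hq (lt_irrefl 0)
  | one => exact ⟨1, one_pos, fun i => Subsingleton.elim _ _⟩
  | coprime a b ha hb hab iha ihb =>
    obtain ⟨P, hP, hPa⟩ := iha (by lia)
    obtain ⟨Q, hQ, hQb⟩ := ihb (by lia)
    refine ⟨P * Q, Nat.mul_pos hP hQ, isPeriod_iff_dvd.mpr fun i => ?_⟩
    rw [Nat.cast_mul]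
    exact (Nat.isCoprime_iff_coprime.mpr hab).mul_dvd
      (isPeriod_iff_dvd.mp (hPa.of_dvd (dvd_mul_right P Q)) i)
      (isPeriod_iff_dvd.mp (hQb.of_dvd (dvd_mul_left Q P)) i)

/-- The order of the central generator in a finite quotient is a modulus for which `d` is
periodic. -/
lemma isPeriod_orderOf_mk (N : Subgroup (Gd d)) [N.Normal] {P : ℕ}
    (hP : gen d .t ^ P ∈ N) : IsPeriod d (orderOf (gen d (.c 1) : Gd d ⧸ N)) P := by
  have ha (i : ℤ) : (gen d (.a (P + i)) : Gd d ⧸ N) = gen d (.a i) := by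
    rw [← gen_t_zpow_conj]
    simp only [QuotientGroup.mk_mul, QuotientGroup.mk_inv, zpow_natCast,
      (QuotientGroup.eq_one_iff _).mpr hP, one_mul, inv_one, mul_one]
  have hc (i : ℤ) : (gen d (.c i) : Gd d ⧸ N) = pcomm (gen d (.a i) : Gd d ⧸ N) (gen d (.a 0)) := by
    have := pcomm_gen_a (d := d) i 0
    rw [sub_zero] at this
    rw [← this]
    rfl
  rw [isPeriod_iff_dvd]
  intro i
  rw [orderOf_dvd_iff_zpow_eq_one, zpow_sub, ← QuotientGroup.mk_zpow, ← QuotientGroup.mk_zpow,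
    ← gen_c, ← gen_c, hc, hc, add_comm, ha, mul_inv_cancel]

variable (hanti : ∀ i : ℤ, d (-i) = -d i) (hd1 : d 1 = 1)

lemma toHall_gen_a_zpow (i k : ℤ) :
    toHall hanti hd1 (gen d (.a i) ^ k) = ⟨0, Finsupp.single i k, 0⟩ := by
  rw [map_zpow, toHall_gen, genImage, base_zpow (apply_zero_of_anti hanti)]

lemma toHall_gen_c_zpow (k : ℤ) : toHall hanti hd1 (gen d (.c 1) ^ k) = ⟨2 * k, 0, 0⟩ := by
  rw [map_zpow, toHall_gen, genImage, central_zpow, hd1, mul_one, mul_comm]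

lemma dvd_of_isConj_gen_a_zpow (hanti : ∀ i : ℤ, d (-i) = -d i) (hd1 : d 1 = 1) {m k : ℤ}
    (h : IsConj (gen d (.a 0) ^ m) (gen d (.a 0) ^ m * gen d (.c 1) ^ k)) : m ∣ k := by
  rw [← isConj_toHall_iff hanti hd1, map_mul, toHall_gen_a_zpow, toHall_gen_c_zpow,
    Hall.isConj_iff_baseConj] at h
  obtain ⟨-, l, x, hx, hz⟩ := h
  simp only [Hall.mul_def, map_zero, add_zero, zero_add, shift_zero] at hx hz
  rw [add_comm] at hx
  rw [add_right_cancel hx, form_swap hanti x] at hz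
  have h1 : (Finsupp.single 0 m : ℤ →₀ ℤ) = m • Finsupp.single 0 1 := by simp
  rw [h1, map_smul, smul_eq_mul] at hz
  exact ⟨form d x (Finsupp.single 0 1), by lia⟩

lemma gen_a_conj (hanti : ∀ i : ℤ, d (-i) = -d i) (hd1 : d 1 = 1) (m u : ℤ) :
    gen d (.a 1) ^ u * gen d (.a 0) ^ m * (gen d (.a 1) ^ u)⁻¹ =
      gen d (.a 0) ^ m * gen d (.c 1) ^ (m * u) := by
  apply toHall_injective hanti hd1
  simp only [map_mul, map_inv, toHall_gen_a_zpow, toHall_gen_c_zpow]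
  have := hanti 1
  ext <;> simp [Hall.mul_def, Hall.inv_def, apply_zero_of_anti hanti, hd1, this]
  ring

theorem exists_isPeriod_prime_pow (hanti : ∀ i : ℤ, d (-i) = -d i) (hd1 : d 1 = 1)
    (hsep : ∀ g₁ g₂ : Gd d, ¬ IsConj g₁ g₂ → ∃ N : Subgroup (Gd d), N.Normal ∧ N.FiniteIndex ∧
      ∀ h : Gd d, h * g₁ * h⁻¹ * g₂⁻¹ ∉ N) (p k : ℕ) (hp : p.Prime) :
    ∃ P : ℕ, 0 < P ∧ IsPeriod d (p ^ (k + 1)) P := by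
  obtain ⟨N, hN, hfin, H⟩ := hsep (gen d (.a 0) ^ ((p : ℤ) ^ (k + 1)))
    (gen d (.a 0) ^ ((p : ℤ) ^ (k + 1)) * gen d (.c 1) ^ ((p : ℤ) ^ k)) fun hc => by
      have := dvd_of_isConj_gen_a_zpow hanti hd1 hc
      norm_cast at this
      exact absurd ((Nat.pow_dvd_pow_iff_le_right hp.one_lt).mp this) (by lia)
  set m := orderOf (gen d (.c 1) : Gd d ⧸ N) with hm
  refine ⟨N.index, Nat.pos_of_ne_zero hfin.index_ne_zero,
    (isPeriod_orderOf_mk N (N.pow_index_mem _)).of_modulus_dvd ?_⟩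
  by_contra hdvd
  rw [← hm] at hdvd
  obtain ⟨j, hj, hgcd⟩ := (Nat.dvd_prime_pow hp).mp (Nat.gcd_dvd_left (p ^ (k + 1)) m)
  have hjk : j ≤ k := by
    by_contra hlt
    have : j = k + 1 := by lia
    rw [this] at hgcd
    exact hdvd (hgcd ▸ Nat.gcd_dvd_right _ _)
  obtain ⟨r, hr⟩ : ((p ^ (k + 1)).gcd m : ℤ) ∣ (p : ℤ) ^ k := by
    rw [hgcd]
    exact_mod_cast pow_dvd_pow p hjk
  have hbez := Nat.gcd_eq_gcd_ab (p ^ (k + 1)) m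
  rw [hbez] at hr
  set u := (p ^ (k + 1)).gcdA m
  set v := (p ^ (k + 1)).gcdB m
  apply H (gen d (.a 1) ^ (u * r))
  rw [gen_a_conj hanti hd1, mul_inv_rev]
  have : gen d (.a 0) ^ ((p : ℤ) ^ (k + 1)) * gen d (.c 1) ^ ((p : ℤ) ^ (k + 1) * (u * r)) *
      ((gen d (.c 1) ^ ((p : ℤ) ^ k))⁻¹ * (gen d (.a 0) ^ ((p : ℤ) ^ (k + 1)))⁻¹) =
      gen d (.c 1) ^ (-(m * (v * r)) : ℤ) := by
    rw [← zpow_neg, ← mul_assoc, mul_assoc (gen d (.a 0) ^ _), ← zpow_add,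
      ((commute_gen_c _).zpow_right _).eq, mul_inv_cancel_right, hr]
    congr 1
    push_cast
    ring
  rw [this, ← QuotientGroup.eq_one_iff, QuotientGroup.mk_zpow, ← orderOf_dvd_iff_zpow_eq_one,
    ← hm, dvd_neg]
  exact dvd_mul_right _ _

end Periodicity

end HallGroup

/-- For `d : ℤ → ℤ` antisymmetric with `d 1 = 1`, the group `G_d` is
conjugacy separable if and only if `d mod q` is periodic for every positive integer `q`.
(Here the images of `g₁`, `g₂` in `G ⧸ N` are conjugate iff `h g₁ h⁻¹ g₂⁻¹ ∈ N` for
some `h`.) -/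
theorem stmt_6 (d : ℤ → ℤ) (hanti : ∀ i : ℤ, d (-i) = -d i) (hd1 : d 1 = 1) :
    (∀ g₁ g₂ : Gd d, ¬ IsConj g₁ g₂ →
        ∃ N : Subgroup (Gd d), N.Normal ∧ N.FiniteIndex ∧
          ∀ h : Gd d, h * g₁ * h⁻¹ * g₂⁻¹ ∉ N) ↔
      ∀ q : ℕ, 0 < q → ∃ P : ℕ, 0 < P ∧
        ∀ i : ℤ, ((d (i + P) : ZMod q) = (d i : ZMod q)) := by
  constructor
  · intro hsep q hq
    exact HallGroup.exists_isPeriod_of_prime_pow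
      (HallGroup.exists_isPeriod_prime_pow hanti hd1 hsep) q hq
  · intro hper g₁ g₂ hg
    exact HallGroup.exists_normal_of_not_isConj hanti hd1 hper hg
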